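/- Let D be a minimal Enriques diagram with exactly one root R such that m_R = 4 and cod(D) ≤ 10. Then D is isomorphic to one of the diagrams X_{1,0}, X_{1,1}, X_{1,2}, Z_{11}, Y_{1,1}. -/

import Mathlib

open Classical Finset

/-- The raw data of a finite weighted forest equipped with a proximity relation.
The vertices are the elements of `Fin n`; `parent v` is the immediate predecessor of `v`
(`none` iff `v` is a root); `wt v` is the weight of `v`; and `prox a b` means
that `a` is proximate to `b`. -/
structure PreDiagram where
  n : ℕ
  parent : Fin n → Option (Fin n)
  wt : Fin n → ℕ
  prox : Fin n → Fin n → Prop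

namespace PreDiagram

variable (D : PreDiagram)

/-- `a` is the immediate predecessor of `b`. -/
def ImPred (a b : Fin D.n) : Prop := D.parent b = some a

/-- `a` is a predecessor of `b` (reflexive-transitive closure of `ImPred`). -/
def Pred (a b : Fin D.n) : Prop := Relation.ReflTransGen D.ImPred a b

/-- `a` is a proper predecessor of `b`. -/
def ProperPred (a b : Fin D.n) : Prop := Relation.TransGen D.ImPred a b

/-- `a` is a remote predecessor of `b`: a proper but not immediate predecessor. -/
def RemotePred (a b : Fin D.n) : Prop := D.ProperPred a b ∧ ¬ D.ImPred a b

def IsRoot (v : Fin D.n) : Prop := D.parent v = none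

/-- A leaf is a vertex with no proper successor. -/
def IsLeaf (v : Fin D.n) : Prop := ∀ w, ¬ D.ImPred v w

/-- `a` is remotely proximate to `b`: proximate to `b`, and `b` is a remote predecessor. -/
def RemoteProx (a b : Fin D.n) : Prop := D.prox a b ∧ D.RemotePred b a

/-- A satellite is a vertex proximate to a remote predecessor. -/
def IsSatellite (v : Fin D.n) : Prop := ∃ t, D.RemoteProx v t

/-- A free vertex is one that is not a satellite. -/
def IsFree (v : Fin D.n) : Prop := ¬ D.IsSatellite v

/-- The laws of a minimal Enriques diagram. -/
structure IsMED : Prop where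
  /-- The graph is a forest: no vertex is a proper predecessor of itself. -/
  forest : ∀ v, ¬ D.ProperPred v v
  /-- Every weight is at least `1`. -/
  wt_pos : ∀ v, 1 ≤ D.wt v
  /-- Law of Proximity: a root is proximate to no vertex. -/
  root_not_prox : ∀ v, D.IsRoot v → ∀ w, ¬ D.prox v w
  /-- Law of Proximity: a non-root is proximate to its immediate predecessor. -/
  prox_parent : ∀ v u, D.parent v = some u → D.prox v u
  /-- Law of Proximity: any other vertex a non-root is proximate to is a remote predecessor. -/
  prox_remote : ∀ v u w, D.parent v = some u → D.prox v w → w ≠ u → D.RemotePred w v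
  /-- Law of Proximity: a non-root is proximate to at most one vertex other than its
  immediate predecessor. -/
  prox_unique : ∀ v u w w', D.parent v = some u → D.prox v w → D.prox v w' →
      w ≠ u → w' ≠ u → w = w'
  /-- Law of Proximity: if `a` is proximate to `b` and `c` lies properly between them,
  then `c` is proximate to `b`. -/
  prox_between : ∀ a b c, D.prox a b → D.ProperPred b c → D.ProperPred c a → D.prox c b
  /-- Proximity Inequality. -/
  prox_ineq : ∀ v, ∑ w ∈ univ.filter (fun w => D.prox w v), D.wt w ≤ D.wt v
  /-- Law of Succession: a vertex `v` has at most `wt v` immediate successors. -/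
  succ_card : ∀ v, (univ.filter (fun w => D.ImPred v w)).card ≤ D.wt v
  /-- Law of Succession: at most two immediate successors are satellites. -/
  succ_sat : ∀ v w₁ w₂ w₃, D.ImPred v w₁ → D.ImPred v w₂ → D.ImPred v w₃ →
      D.IsSatellite w₁ → D.IsSatellite w₂ → D.IsSatellite w₃ →
      w₁ ≠ w₂ → w₁ ≠ w₃ → w₂ ≠ w₃ → False
  /-- Law of Succession: two distinct immediate successors of the same vertex cannot be
  satellites of the same vertex. -/
  succ_sat_diff : ∀ v w₁ w₂ t, D.ImPred v w₁ → D.ImPred v w₂ → w₁ ≠ w₂ →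
      D.RemoteProx w₁ t → D.RemoteProx w₂ t → False
  /-- Law of Minimality: every leaf of weight `1` is a satellite. -/
  minimal : ∀ v, D.IsLeaf v → D.wt v = 1 → D.IsSatellite v

/-- The number of roots. -/
noncomputable def rts : ℕ := (univ.filter (fun v => D.IsRoot v)).card

/-- The number of free vertices. -/
noncomputable def frs : ℕ := (univ.filter (fun v => D.IsFree v)).card

/-- `dim D = rts D + frs D`. -/
noncomputable def dimD : ℕ := D.rts + D.frs

/-- `deg D = Σ_V C(m_V + 1, 2)`. -/
def degD : ℕ := ∑ v, (D.wt v + 1).choose 2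

/-- `cod D = deg D - dim D`. -/
noncomputable def cod : ℤ := (D.degD : ℤ) - (D.dimD : ℤ)

/-- `δ(D) = Σ_V C(m_V, 2)`. -/
def deltaD : ℕ := ∑ v, (D.wt v).choose 2

/-- `r(D) = Σ_V (m_V - Σ_{W ≻ V} m_W)`. -/
noncomputable def rCh : ℤ :=
  ∑ v, ((D.wt v : ℤ) - ∑ w ∈ univ.filter (fun w => D.prox w v), (D.wt w : ℤ))

/-- `μ(D) = 2 δ(D) - r(D) + rts D`. -/
noncomputable def mu : ℤ := 2 * (D.deltaD : ℤ) - D.rCh + (D.rts : ℤ)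

/-- An isomorphism of diagrams: a weight-preserving bijection of the vertices preserving
the immediate-predecessor and proximity relations. -/
structure Iso (D₁ D₂ : PreDiagram) where
  toEquiv : Fin D₁.n ≃ Fin D₂.n
  wt_eq : ∀ v, D₂.wt (toEquiv v) = D₁.wt v
  imPred_iff : ∀ a b, D₂.ImPred (toEquiv a) (toEquiv b) ↔ D₁.ImPred a b
  prox_iff : ∀ a b, D₂.prox (toEquiv a) (toEquiv b) ↔ D₁.prox a b

def Isomorphic (D₁ D₂ : PreDiagram) : Prop := Nonempty (Iso D₁ D₂)

/-- A realization of `D'` as a subdiagram of `D`: an injection of the vertices such that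
the weight of a vertex of `D'` is at most its weight in `D`, and the succession
(predecessor) and proximity relations of `D'` are the ones induced from `D`. -/
structure Subdiagram (D' D : PreDiagram) where
  toFun : Fin D'.n → Fin D.n
  inj : Function.Injective toFun
  wt_le : ∀ v, D'.wt v ≤ D.wt (toFun v)
  pred_iff : ∀ a b, D'.Pred a b ↔ D.Pred (toFun a) (toFun b)
  prox_iff : ∀ a b, D'.prox a b ↔ D.prox (toFun a) (toFun b)

def IsSubdiagram (D' D : PreDiagram) : Prop := Nonempty (Subdiagram D' D)

/-- The parent function of a chain `0 → 1 → ⋯ → n-1`. -/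
def chainParent (n : ℕ) (v : Fin n) : Option (Fin n) :=
  if v.val = 0 then none
  else some ⟨v.val - 1, lt_of_le_of_lt (Nat.sub_le _ _) v.isLt⟩

/-- The diagram `A_k` (`k ≥ 1`): for `k = 2i-1`, a chain of `i` free vertices of weight `2`;
for `k = 2i`, such a chain followed by a chain of two vertices of weight `1`, both
proximate to the `i`-th weight-`2` vertex. -/
def diagA (k : ℕ) : PreDiagram where
  n := if k % 2 = 0 then k / 2 + 2 else (k + 1) / 2
  parent := chainParent _
  wt := fun v => if v.val < (k + 1) / 2 then 2 else 1
  prox := fun a b => a.val = b.val + 1 ∨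
    (k % 2 = 0 ∧ a.val = k / 2 + 1 ∧ b.val + 1 = k / 2)

/-- The diagram `D_k` (`k ≥ 4`): a root of weight `3`, followed by nothing if `k = 4`,
by two vertices of weight `1` both proximate to the root if `k = 5`, and by the diagram
`A_{k-5}` if `k ≥ 6`. -/
def diagD (k : ℕ) : PreDiagram where
  n := (k - 4) / 2 + (if k % 2 = 0 then 1 else 3)
  parent := chainParent _
  wt := fun v => if v.val = 0 then 3 else if v.val ≤ (k - 4) / 2 then 2 else 1
  prox := fun a b => a.val = b.val + 1 ∨
    (k % 2 = 1 ∧ a.val = (k - 4) / 2 + 2 ∧ b.val = (k - 4) / 2)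

/-- The diagram `E_{6l+j}` (`l ≥ 1`, `j ∈ {0,1,2}`), with argument `m = 6l + j`. -/
def diagE (m : ℕ) : PreDiagram where
  n := m / 6 + (if m % 6 = 1 then 2 else 3)
  parent := chainParent _
  wt := fun v => if v.val < m / 6 then 3 else
    if 1 ≤ m % 6 ∧ v.val = m / 6 then 2 else 1
  prox := fun a b => a.val = b.val + 1 ∨
    (m % 6 = 0 ∧ (a.val = m / 6 + 1 ∨ a.val = m / 6 + 2) ∧ b.val + 1 = m / 6) ∨
    (m % 6 = 1 ∧ a.val = m / 6 + 1 ∧ b.val + 1 = m / 6) ∨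
    (m % 6 = 2 ∧ ((a.val = m / 6 + 1 ∧ b.val + 1 = m / 6) ∨
                  (a.val = m / 6 + 2 ∧ b.val = m / 6)))

/-- The diagram `J_{l,k}` (`l ≥ 2`, `k ≥ 0`): a chain of `l - 1` free vertices of weight `3`
followed by the diagram `D_{k+4}`. -/
def diagJ (l k : ℕ) : PreDiagram where
  n := (l - 1) + k / 2 + (if k % 2 = 0 then 1 else 3)
  parent := chainParent _
  wt := fun v => if v.val ≤ l - 1 then 3 else if v.val ≤ l - 1 + k / 2 then 2 else 1
  prox := fun a b => a.val = b.val + 1 ∨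
    (k % 2 = 1 ∧ a.val = (l - 1) + k / 2 + 2 ∧ b.val = (l - 1) + k / 2)

/-- The diagram `X_{1,0}`: a single root of weight `4`. -/
def diagX10 : PreDiagram where
  n := 1
  parent := chainParent _
  wt := fun _ => 4
  prox := fun a b => a.val = b.val + 1

/-- The diagram `X_{1,1}`: a root of weight `4` followed by a chain of two vertices of
weight `1`, both proximate to the root. -/
def diagX11 : PreDiagram where
  n := 3
  parent := chainParent _
  wt := fun v => if v.val = 0 then 4 else 1
  prox := fun a b => a.val = b.val + 1 ∨ (a.val = 2 ∧ b.val = 0)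

/-- The diagram `X_{1,2}`: a root of weight `4` followed by one free vertex of weight `2`. -/
def diagX12 : PreDiagram where
  n := 2
  parent := chainParent _
  wt := fun v => if v.val = 0 then 4 else 2
  prox := fun a b => a.val = b.val + 1

/-- The diagram `Z_{11}`: a root of weight `4` followed by a chain of three vertices of
weight `1`, all proximate to the root. -/
def diagZ11 : PreDiagram where
  n := 4
  parent := chainParent _
  wt := fun v => if v.val = 0 then 4 else 1
  prox := fun a b => a.val = b.val + 1 ∨ ((a.val = 2 ∨ a.val = 3) ∧ b.val = 0)

/-- The diagram `Y_{1,1}`: a root of weight `4` with two immediate free successors of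
weight `1`, each of which has one immediate successor of weight `1` that is remotely
proximate to the root. -/
def diagY11 : PreDiagram where
  n := 5
  parent := fun v =>
    if v.val = 0 then none
    else if v.val ≤ 2 then some ⟨0, by omega⟩
    else if v.val = 3 then some ⟨1, by omega⟩
    else some ⟨2, by omega⟩
  wt := fun v => if v.val = 0 then 4 else 1
  prox := fun a b => (a.val = 1 ∧ b.val = 0) ∨ (a.val = 2 ∧ b.val = 0) ∨
    (a.val = 3 ∧ (b.val = 1 ∨ b.val = 0)) ∨ (a.val = 4 ∧ (b.val = 2 ∨ b.val = 0))

/-- The disjoint union of two diagrams. -/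
def disjUnion (D₁ D₂ : PreDiagram) : PreDiagram where
  n := D₁.n + D₂.n
  parent := fun v =>
    if h : v.val < D₁.n then
      (D₁.parent ⟨v.val, h⟩).map
        (fun w => ⟨w.val, Nat.lt_of_lt_of_le w.isLt (Nat.le_add_right _ _)⟩)
    else
      (D₂.parent ⟨v.val - D₁.n, by have := v.isLt; omega⟩).map
        (fun w => ⟨D₁.n + w.val, by have := w.isLt; omega⟩)
  wt := fun v =>
    if h : v.val < D₁.n then D₁.wt ⟨v.val, h⟩
    else D₂.wt ⟨v.val - D₁.n, by have := v.isLt; omega⟩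
  prox := fun a b =>
    (∃ (ha : a.val < D₁.n) (hb : b.val < D₁.n), D₁.prox ⟨a.val, ha⟩ ⟨b.val, hb⟩) ∨
    (∃ (_ : D₁.n ≤ a.val) (_ : D₁.n ≤ b.val),
      D₂.prox ⟨a.val - D₁.n, by have := a.isLt; omega⟩
              ⟨b.val - D₁.n, by have := b.isLt; omega⟩)

end PreDiagram

namespace PreDiagram

theorem iso_of (D E : PreDiagram) (f : Fin E.n → Fin D.n) (hi : Function.Injective f)
    (hs : ∀ v, ∃ x, f x = v) (hwt : ∀ x, D.wt (f x) = E.wt x)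
    (hp : ∀ x, D.parent (f x) = (E.parent x).map f)
    (hx : ∀ x y, D.prox (f x) (f y) ↔ E.prox x y) : Isomorphic D E := by
  let e : Fin E.n ≃ Fin D.n := Equiv.ofBijective f ⟨hi, hs⟩
  have he : ∀ x, e x = f x := fun x => rfl
  refine ⟨⟨e.symm, ?_, ?_, ?_⟩⟩
  · intro v
    obtain ⟨x, rfl⟩ := e.surjective v
    rw [e.symm_apply_apply, he, hwt]
  · intro a b
    obtain ⟨x, rfl⟩ := e.surjective a
    obtain ⟨y, rfl⟩ := e.surjective b
    rw [e.symm_apply_apply, e.symm_apply_apply, he, he]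
    simp only [ImPred, hp]
    constructor
    · intro h; simp [h]
    · intro h
      simp only [Option.map_eq_some_iff] at h
      obtain ⟨z, hz, hzx⟩ := h
      rw [hz, hi hzx]
  · intro a b
    obtain ⟨x, rfl⟩ := e.surjective a
    obtain ⟨y, rfl⟩ := e.surjective b
    rw [e.symm_apply_apply, e.symm_apply_apply, he, he, hx]

variable {D : PreDiagram}

/-- Contribution of a vertex to `cod`. -/
noncomputable def cst (D : PreDiagram) (v : Fin D.n) : ℕ :=
  (D.wt v + 1).choose 2 - (if D.IsFree v then 1 else 0)

theorem choose_ge (m : ℕ) (_h : 1 ≤ m) : m ≤ (m + 1).choose 2 := by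
  rw [Nat.choose_succ_succ' m 1]; simp

theorem choose_ge3 (m : ℕ) (h : 2 ≤ m) : 3 ≤ (m + 1).choose 2 :=
  (show 3 = (2 + 1).choose 2 by decide) ▸ Nat.choose_le_choose 2 (by omega)

theorem choose_ge6 (m : ℕ) (h : 3 ≤ m) : 6 ≤ (m + 1).choose 2 :=
  (show 6 = (3 + 1).choose 2 by decide) ▸ Nat.choose_le_choose 2 (by omega)

theorem sat_cst (hD : D.IsMED) (v : Fin D.n) (h : D.IsSatellite v) : 1 ≤ D.cst v := by
  have := choose_ge (D.wt v) (hD.wt_pos v)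
  have := hD.wt_pos v
  simp [cst, IsFree, h]; omega

theorem no_pred_root {R : Fin D.n} (hR : D.IsRoot R) (v) : ¬ D.ProperPred v R := by
  intro h
  cases h with
  | single h => simp [ImPred, IsRoot] at *; simp_all
  | tail _ h => simp [ImPred, IsRoot] at *; simp_all

theorem root_free {R : Fin D.n} (hR : D.IsRoot R) : D.IsFree R := by
  rintro ⟨t, _, h, _⟩
  exact no_pred_root hR t h

theorem cst_sum (hD : D.IsMED) (R : Fin D.n) (hR : D.IsRoot R)
    (huniq : ∀ v, D.IsRoot v → v = R) (hw : D.wt R = 4) (hcod : D.cod ≤ 10)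
    (S : Finset (Fin D.n)) (hS : R ∉ S) : ∑ v ∈ S, D.cst v ≤ 2 := by
  have h1 : D.degD = ∑ v, D.cst v + D.frs := by
    unfold degD frs
    rw [Finset.card_filter, ← Finset.sum_add_distrib]
    apply Finset.sum_congr rfl
    intro v _
    have := choose_ge (D.wt v) (hD.wt_pos v)
    have := hD.wt_pos v
    unfold cst
    split_ifs <;> omega
  have h2 : D.rts = 1 := by
    unfold rts
    rw [Finset.card_eq_one]
    refine ⟨R, ?_⟩
    ext v
    simp only [mem_filter, mem_univ, true_and, mem_singleton]
    exact ⟨huniq v, fun h => h ▸ hR⟩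
  have h3 : ∑ v, D.cst v ≤ 11 := by
    unfold cod dimD at hcod
    omega
  have h4 : D.cst R = 9 := by
    simp [cst, root_free hR, hw]; decide
  have h5 : ∑ v ∈ insert R S, D.cst v ≤ ∑ v, D.cst v :=
    Finset.sum_le_sum_of_subset (Finset.subset_univ _)
  rw [Finset.sum_insert hS] at h5
  omega

theorem exists_leaf (hD : D.IsMED) (v : Fin D.n) : ∃ w, D.Pred v w ∧ D.IsLeaf w := by
  let r : Fin D.n → Fin D.n → Prop := fun a b => D.ProperPred b a
  have : IsTrans (Fin D.n) r := ⟨fun a b c h1 h2 => Relation.TransGen.trans h2 h1⟩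
  have : Std.Irrefl r := ⟨fun a h => hD.forest a h⟩
  have wf : WellFounded r := Finite.wellFounded_of_trans_of_irrefl r
  induction v using wf.induction with
  | _ v ih =>
    by_cases h : D.IsLeaf v
    · exact ⟨v, Relation.ReflTransGen.refl, h⟩
    · simp only [IsLeaf, not_forall, not_not] at h
      obtain ⟨u, hu⟩ := h
      obtain ⟨w, hw, hl⟩ := ih u (Relation.TransGen.single hu)
      exact ⟨w, Relation.ReflTransGen.head hu hw, hl⟩

theorem root_pred (hD : D.IsMED) (R : Fin D.n)
    (huniq : ∀ v, D.IsRoot v → v = R) (v : Fin D.n) : D.Pred R v := by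
  let r : Fin D.n → Fin D.n → Prop := fun a b => D.ProperPred a b
  have : IsTrans (Fin D.n) r := ⟨fun a b c h1 h2 => Relation.TransGen.trans h1 h2⟩
  have : Std.Irrefl r := ⟨fun a h => hD.forest a h⟩
  have wf : WellFounded r := Finite.wellFounded_of_trans_of_irrefl r
  induction v using wf.induction with
  | _ v ih =>
    cases h : D.parent v with
    | none => rw [huniq v h]; exact Relation.ReflTransGen.refl
    | some u => exact Relation.ReflTransGen.tail (ih u (Relation.TransGen.single h)) h

theorem wt_le_of_prox (hD : D.IsMED) {a b : Fin D.n} (h : D.prox a b) : D.wt a ≤ D.wt b :=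
  le_trans (Finset.single_le_sum (f := D.wt) (fun _ _ => Nat.zero_le _) (by simpa using h))
    (hD.prox_ineq b)

theorem prox_one (hD : D.IsMED) {a b c : Fin D.n} (h1 : D.wt c = 1) (ha : D.prox a c)
    (hb : D.prox b c) : a = b := by
  by_contra hab
  have h := hD.prox_ineq c
  have h2 : ∑ w ∈ {a, b}, D.wt w ≤ ∑ w ∈ univ.filter (fun w => D.prox w c), D.wt w := by
    apply Finset.sum_le_sum_of_subset
    intro x hx
    simp only [mem_insert, mem_singleton] at hx
    rcases hx with rfl | rfl <;> simpa
  rw [Finset.sum_pair hab] at h2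
  have := hD.wt_pos a
  have := hD.wt_pos b
  omega

theorem wt_le_of_pred (hD : D.IsMED) {a b : Fin D.n} (h : D.Pred a b) : D.wt b ≤ D.wt a := by
  induction h with
  | refl => exact le_rfl
  | tail _ h ih => exact le_trans (wt_le_of_prox hD (hD.prox_parent _ _ h)) ih

theorem caseA (hD : D.IsMED) (R : Fin D.n)
    (hR : D.IsRoot R) (huniq : ∀ v, D.IsRoot v → v = R)
    (hw : D.wt R = 4) (hcod : D.cod ≤ 10) (A : Fin D.n) (hAR : A ≠ R) (hA : 2 ≤ D.wt A) :
    Isomorphic D diagX12 := by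
  have hsum := cst_sum hD R hR huniq hw hcod
  have hcA : 2 ≤ D.cst A := by
    have := choose_ge3 _ hA
    unfold cst; split_ifs <;> omega
  have hA2 : D.wt A = 2 := by
    by_contra hne
    have := choose_ge6 (D.wt A) (by omega)
    have h1 : 5 ≤ D.cst A := by unfold cst; split_ifs <;> omega
    have := hsum {A} (by simpa using hAR.symm)
    simp at this; omega
  have hall : ∀ v, v = R ∨ v = A := by
    by_contra! hcon
    obtain ⟨v, hvR, hvA⟩ := hcon
    have key : ∀ v, v ≠ R → v ≠ A → D.cst v = 0 := by
      intro v hvR hvA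
      have := hsum {v, A} (by simp [hvR.symm, hAR.symm])
      rw [Finset.sum_pair hvA] at this
      omega
    have hv1 : D.wt v ≤ 1 := by
      by_contra hlt
      have := choose_ge3 (D.wt v) (by omega)
      have h := key v hvR hvA
      unfold cst at h; split_ifs at h <;> omega
    obtain ⟨w, hvw, hl⟩ := exists_leaf hD v
    have hle := wt_le_of_pred hD hvw
    have hpos := hD.wt_pos w
    have hs := sat_cst hD w (hD.minimal w hl (by omega))
    have := key w (by rintro rfl; omega) (by rintro rfl; omega)
    omega
  have hpA : D.parent A = some R := by
    cases h : D.parent A with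
    | none => exact absurd (huniq A h) hAR
    | some u =>
      rcases hall u with rfl | rfl
      · rfl
      · exact (hD.forest u (Relation.TransGen.single h)).elim
  have hRR := hD.root_not_prox R hR
  have hAA : ¬ D.prox A A := by
    intro h
    exact hD.forest A (hD.prox_remote A R A hpA h hAR).1
  have hAp := hD.prox_parent A R hpA
  apply iso_of D diagX12 ![R, A]
  · intro x y h
    fin_cases x <;> fin_cases y <;> simp_all [diagX12]
  · intro v
    rcases hall v with rfl | rfl
    · exact ⟨(0 : Fin 2), rfl⟩
    · exact ⟨(1 : Fin 2), rfl⟩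
  · intro x
    fin_cases x <;> simp_all [diagX12]
  · intro x
    fin_cases x <;> simp_all [diagX12, chainParent, IsRoot]
  · intro x y
    fin_cases x <;> fin_cases y <;> simp_all [diagX12]

theorem sat_root (hD : D.IsMED) (R : Fin D.n) (_hR : D.IsRoot R)
    (hone : ∀ v, v ≠ R → D.wt v = 1) {w t : Fin D.n} (h : D.RemoteProx w t) : t = R := by
  by_contra ht
  obtain ⟨hp, hpp, hni⟩ := h
  obtain ⟨u, hu, huw⟩ := (Relation.TransGen.head'_iff).1 hpp
  have := prox_one hD (hone t ht) hp (hD.prox_parent _ _ hu)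
  subst this
  exact hni hu

theorem prox_root (hD : D.IsMED) (R : Fin D.n) (hR : D.IsRoot R)
    (huniq : ∀ v, D.IsRoot v → v = R)
    (hone : ∀ v, v ≠ R → D.wt v = 1) {v : Fin D.n} (hv : v ≠ R) : D.prox v R := by
  obtain ⟨w, hvw, hl⟩ := exists_leaf hD v
  have hRv : D.ProperPred R v := by
    rcases Relation.reflTransGen_iff_eq_or_transGen.1 (root_pred hD R huniq v) with h | h
    · exact absurd h hv
    · exact h
  have hwR : w ≠ R := by
    rintro rfl
    exact no_pred_root hR _ (hRv.trans_left hvw)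
  obtain ⟨t, ht⟩ := hD.minimal w hl (hone w hwR)
  have := sat_root hD R hR hone ht
  subst this
  rcases Relation.reflTransGen_iff_eq_or_transGen.1 hvw with h | h
  · exact h ▸ ht.1
  · exact hD.prox_between _ _ _ ht.1 hRv h

theorem prox_char (hD : D.IsMED) (R : Fin D.n) (hR : D.IsRoot R)
    (huniq : ∀ v, D.IsRoot v → v = R)
    (hone : ∀ v, v ≠ R → D.wt v = 1) (a b : Fin D.n) :
    D.prox a b ↔ (D.parent a = some b ∨ (b = R ∧ a ≠ R)) := by
  constructor
  · intro h
    by_cases haR : a = R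
    · subst haR; exact absurd h (hD.root_not_prox _ hR b)
    cases hp : D.parent a with
    | none => exact absurd (huniq a hp) haR
    | some u =>
      by_cases hbu : b = u
      · left; rw [hbu]
      · right
        exact ⟨sat_root hD R hR hone ⟨h, hD.prox_remote a u b hp h hbu⟩, haR⟩
  · rintro (h | ⟨rfl, h⟩)
    · exact hD.prox_parent _ _ h
    · exact prox_root hD _ hR huniq hone h

theorem sat_of (hD : D.IsMED) (R : Fin D.n) (hR : D.IsRoot R)
    (huniq : ∀ v, D.IsRoot v → v = R)
    (hone : ∀ v, v ≠ R → D.wt v = 1) {v : Fin D.n} (hv : v ≠ R) (hp : D.parent v ≠ some R) : D.IsSatellite v := by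
  cases h : D.parent v with
  | none => exact absurd (huniq v h) hv
  | some u =>
    have hx := prox_root hD R hR huniq hone hv
    refine ⟨R, hx, hD.prox_remote v u R h hx ?_⟩
    rintro rfl
    exact hp h

theorem child_of (hD : D.IsMED) (R : Fin D.n) (hR : D.IsRoot R)
    (hone : ∀ v, v ≠ R → D.wt v = 1) {v : Fin D.n} (hv : v ≠ R) (hp : D.parent v = some R) :
    ∃ w, D.parent w = some v := by
  by_contra! hcon
  obtain ⟨t, ht⟩ := hD.minimal v hcon (hone v hv)
  have := sat_root hD R hR hone ht
  subst this
  exact ht.2.2 hp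

theorem caseB (hD : D.IsMED) (R : Fin D.n)
    (hR : D.IsRoot R) (huniq : ∀ v, D.IsRoot v → v = R)
    (hw : D.wt R = 4) (hcod : D.cod ≤ 10) (hone : ∀ v, v ≠ R → D.wt v = 1) :
    Isomorphic D diagX10 ∨ Isomorphic D diagX11 ∨
    Isomorphic D diagZ11 ∨ Isomorphic D diagY11 := by
  have hsum := cst_sum hD R hR huniq hw hcod
  have hprox := prox_char hD R hR huniq hone
  have hchild : ∀ v, v ≠ R → D.parent v = some R → ∃ w, D.parent w = some v :=
    fun v => child_of hD R hR hone
  have hpar : ∀ v, v ≠ R → ∃ u, D.parent v = some u := by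
    intro v hv
    cases h : D.parent v with
    | none => exact absurd (huniq v h) hv
    | some u => exact ⟨u, rfl⟩
  have hirr : ∀ v, D.parent v ≠ some v := fun v h => hD.forest v (Relation.TransGen.single h)
  have huc : ∀ a b c, c ≠ R → D.parent a = some c → D.parent b = some c → a = b :=
    fun a b c hc ha hb =>
      prox_one hD (hone c hc) (hD.prox_parent _ _ ha) (hD.prox_parent _ _ hb)
  have hRnone : D.parent R = none := hR
  have hthree : ∀ x y z, x ≠ R → y ≠ R → z ≠ R → D.parent x ≠ some R → D.parent y ≠ some R →
      D.parent z ≠ some R → x ≠ y → x ≠ z → y ≠ z → False := by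
    intro x y z hx hy hz px py pz hxy hxz hyz
    have h := hsum {x, y, z} (by simp [hx.symm, hy.symm, hz.symm])
    rw [Finset.sum_insert (by simp [hxy, hxz]), Finset.sum_pair hyz] at h
    have := sat_cst hD x (sat_of hD R hR huniq hone hx px)
    have := sat_cst hD y (sat_of hD R hR huniq hone hy py)
    have := sat_cst hD z (sat_of hD R hR huniq hone hz pz)
    omega
  have hcl : ∀ x y, D.parent x = some y → x ≠ R := by
    rintro x y h rfl; simp [hRnone] at h
  by_cases h0 : ∀ v, v = R
  · left
    apply iso_of D diagX10 ![R]
    · intro x y h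
      fin_cases x; fin_cases y; rfl
    · intro v; exact ⟨(0 : Fin 1), (h0 v).symm⟩
    · intro x; fin_cases x; simp [diagX10, hw]
    · intro x; fin_cases x; simp [diagX10, chainParent, hRnone]
    · intro x y; fin_cases x; fin_cases y; simp [diagX10, hprox, hRnone]
  right
  push Not at h0
  obtain ⟨v0, hv0⟩ := h0
  obtain ⟨a, ha⟩ : ∃ a, D.parent a = some R := by
    rcases Relation.ReflTransGen.cases_head (root_pred hD R huniq v0) with h | ⟨c, hc, _⟩
    · exact absurd h.symm hv0
    · exact ⟨c, hc⟩
  have haR := hcl _ _ ha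
  obtain ⟨b, hb⟩ := hchild a haR ha
  have hbR := hcl _ _ hb
  have hba : b ≠ a := by rintro rfl; exact hirr _ hb
  by_cases hc : ∃ c, D.parent c = some b
  · obtain ⟨c, hc⟩ := hc
    have hcR := hcl _ _ hc
    have hcb : c ≠ b := by rintro rfl; exact hirr _ hc
    have hca : c ≠ a := by
      rintro rfl; rw [ha] at hc; exact hbR (Option.some.inj hc).symm
    have hpb : D.parent b ≠ some R := by rw [hb]; simpa using haR
    have hpc : D.parent c ≠ some R := by rw [hc]; simpa using hbR
    have hall : ∀ v, v = R ∨ v = a ∨ v = b ∨ v = c := by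
      by_contra! hcon
      obtain ⟨v, h1, h2, h3, h4⟩ := hcon
      have hpv : D.parent v = some R := by
        by_contra hpv
        exact hthree b c v hbR hcR h1 hpb hpc hpv hcb.symm h3.symm h4.symm
      obtain ⟨w, hvw⟩ := hchild v h1 hpv
      refine hthree b c w hbR hcR (hcl _ _ hvw) hpb hpc (by rw [hvw]; simpa using h1)
        hcb.symm ?_ ?_
      · rintro rfl; rw [hb] at hvw; exact h2 (Option.some.inj hvw).symm
      · rintro rfl; rw [hc] at hvw; exact h3 (Option.some.inj hvw).symm
    right; left
    apply iso_of D diagZ11 ![R, a, b, c]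
    · intro x y h
      fin_cases x <;> fin_cases y <;>
        simp [diagZ11, haR, hbR, hcR, hba, hca, hcb, haR.symm, hbR.symm, hcR.symm, hba.symm,
          hca.symm, hcb.symm] at h ⊢
    · intro v
      rcases hall v with h | h | h | h
      · exact ⟨(0 : Fin 4), h.symm⟩
      · exact ⟨(1 : Fin 4), h.symm⟩
      · exact ⟨(2 : Fin 4), h.symm⟩
      · exact ⟨(3 : Fin 4), h.symm⟩
    · intro x
      fin_cases x <;> simp [diagZ11, hw, hone, haR, hbR, hcR]
    · intro x
      fin_cases x <;> simp [diagZ11, chainParent, hRnone, ha, hb, hc]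
    · intro x y
      fin_cases x <;> fin_cases y <;>
        simp [diagZ11, hprox, hRnone, ha, hb, hc, haR, hbR, hcR, hba, hca, hcb, haR.symm, hbR.symm,
          hcR.symm, hba.symm, hca.symm, hcb.symm]
  by_cases h3 : ∀ v, v = R ∨ v = a ∨ v = b
  · left
    apply iso_of D diagX11 ![R, a, b]
    · intro x y h
      fin_cases x <;> fin_cases y <;>
        simp [diagX11, haR, hbR, hba, haR.symm, hbR.symm, hba.symm] at h ⊢
    · intro v
      rcases h3 v with h | h | h
      · exact ⟨(0 : Fin 3), h.symm⟩
      · exact ⟨(1 : Fin 3), h.symm⟩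
      · exact ⟨(2 : Fin 3), h.symm⟩
    · intro x
      fin_cases x <;> simp [diagX11, hw, hone, haR, hbR]
    · intro x
      fin_cases x <;> simp [diagX11, chainParent, hRnone, ha, hb]
    · intro x y
      fin_cases x <;> fin_cases y <;>
        simp [diagX11, hprox, hRnone, ha, hb, haR, hbR, hba, haR.symm, hbR.symm, hba.symm]
  right; right
  push Not at h3 hc
  obtain ⟨v, hvR, hva, hvb⟩ := h3
  have hpb : D.parent b ≠ some R := by rw [hb]; simpa using haR
  obtain ⟨d, hd, hda, hdb⟩ : ∃ d, D.parent d = some R ∧ d ≠ a ∧ d ≠ b := by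
    by_cases hpv : D.parent v = some R
    · exact ⟨v, hpv, hva, hvb⟩
    obtain ⟨u, hu⟩ := hpar v hvR
    have huR : u ≠ R := by rintro rfl; exact hpv hu
    have hua : u ≠ a := by rintro rfl; exact hvb (huc _ _ _ huR hu hb)
    have hub : u ≠ b := by rintro rfl; exact hc _ hu
    have huv : u ≠ v := by rintro rfl; exact hirr _ hu
    refine ⟨u, ?_, hua, hub⟩
    by_contra hpu
    exact hthree b u v hbR huR hvR hpb hpu hpv hub.symm hvb.symm huv
  have hdR := hcl _ _ hd
  obtain ⟨e, he⟩ := hchild d hdR hd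
  have heR := hcl _ _ he
  have hed : e ≠ d := by rintro rfl; exact hirr _ he
  have hpe : D.parent e ≠ some R := by rw [he]; simpa using hdR
  have hea : e ≠ a := by rintro rfl; exact hpe ha
  have heb : e ≠ b := by
    rintro rfl; rw [hb] at he; exact hda (Option.some.inj he).symm
  have hall : ∀ v, v = R ∨ v = a ∨ v = d ∨ v = b ∨ v = e := by
    by_contra! hcon
    obtain ⟨v, h1, h2, h3, h4, h5⟩ := hcon
    have hpv : D.parent v = some R := by
      by_contra hpv
      exact hthree b e v hbR heR h1 hpb hpe hpv heb.symm h4.symm h5.symm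
    obtain ⟨w, hvw⟩ := hchild v h1 hpv
    refine hthree b e w hbR heR (hcl _ _ hvw) hpb hpe (by rw [hvw]; simpa using h1)
      heb.symm ?_ ?_
    · rintro rfl; rw [hb] at hvw; exact h2 (Option.some.inj hvw).symm
    · rintro rfl; rw [he] at hvw; exact h3 (Option.some.inj hvw).symm
  apply iso_of D diagY11 ![R, a, d, b, e]
  · intro x y h
    fin_cases x <;> fin_cases y <;>
      simp [diagY11, haR, hbR, hba, haR.symm, hbR.symm, hba.symm, hdR, hdR.symm, heR, heR.symm,
        hda, hda.symm, hdb, hdb.symm, hed, hed.symm, hea, hea.symm, heb, heb.symm] at h ⊢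
  · intro v
    rcases hall v with h | h | h | h | h
    · exact ⟨(0 : Fin 5), h.symm⟩
    · exact ⟨(1 : Fin 5), h.symm⟩
    · exact ⟨(2 : Fin 5), h.symm⟩
    · exact ⟨(3 : Fin 5), h.symm⟩
    · exact ⟨(4 : Fin 5), h.symm⟩
  · intro x
    fin_cases x <;> simp [diagY11, hw, hone, haR, hbR, hdR, heR]
  · intro x
    fin_cases x <;> simp [diagY11, hRnone, ha, hb, hd, he]
  · intro x y
    fin_cases x <;> fin_cases y <;>
      simp [diagY11, hprox, hRnone, ha, hb, hd, he, haR, hbR, hba, haR.symm, hbR.symm, hba.symm,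
        hdR, hdR.symm, heR, heR.symm, hda, hda.symm, hdb, hdb.symm, hed, hed.symm,
        hea, hea.symm, heb, heb.symm]

end PreDiagram

open PreDiagram in
/-- A minimal Enriques diagram with exactly one root `R` of weight `4` and `cod(D) ≤ 10`
is isomorphic to one of `X_{1,0}`, `X_{1,1}`, `X_{1,2}`, `Z_{11}`, `Y_{1,1}`. -/
theorem statement5 (D : PreDiagram) (hD : D.IsMED) (R : Fin D.n)
    (hR : D.IsRoot R) (huniq : ∀ v, D.IsRoot v → v = R)
    (hw : D.wt R = 4) (hcod : D.cod ≤ 10) :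
    Isomorphic D diagX10 ∨ Isomorphic D diagX11 ∨ Isomorphic D diagX12 ∨
    Isomorphic D diagZ11 ∨ Isomorphic D diagY11 := by
  by_cases h : ∃ A, A ≠ R ∧ 2 ≤ D.wt A
  · obtain ⟨A, hAR, hA⟩ := h
    exact Or.inr (Or.inr (Or.inl (caseA hD R hR huniq hw hcod A hAR hA)))
  · push Not at h
    have hone : ∀ v, v ≠ R → D.wt v = 1 := by
      intro v hv
      have := h v hv
      have := hD.wt_pos v
      omega
    rcases caseB hD R hR huniq hw hcod hone with h | h | h | h
    · exact Or.inl h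
    · exact Or.inr (Or.inl h)
    · exact Or.inr (Or.inr (Or.inr (Or.inl h)))
    · exact Or.inr (Or.inr (Or.inr (Or.inr h)))
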